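/- arXiv:2102.02029 — 2 statements merged into one kernel-verified Lean document; each statement's English description precedes it below -/
import Mathlib

section
/- Suppose f satisfies quadratic growth with parameter α > 0 w.r.t. K. Let δ > 0, κ ≥ 0, C ≥ f(x_1) − f*, and M_1 ≥ max{ 4β/α + 8βD_{F*}²·max{2κ, δ⁻¹}, 1/2 }. Consider sequences generated as follows: x_1 ∈ V; at each step t ≥ 1, x_t = ∑_{i=1}^{k_t} λ_i v_i is a convex combination of vertices v_i ∈ V, v_{k_t+1} ∈ argmin_{u∈V} ( uᵀ∇f(x_t) + βρ_t‖u − x_t‖² ) with ρ_t = min{ √( 2·max{2κ, δ⁻¹}·C·exp(−(t−1)/(4M_1)) ), 1 } / (2M_1), and x_{t+1} minimizes either x ↦ xᵀ∇f(x_t) + (β/2)‖x − x_t‖² or f itself over conv(v_1,…,v_{k_t+1}). Assume additionally that for every t, letting x_t* ∈ X* be the point of X* closest to x_t and h_t = f(x_t) − f*, there exist Δ*_i ∈ [0,λ_i] and z ∈ F* such that x_t* = ∑_{i=1}^{k_t} (λ_i − Δ*_i)v_i + (∑Δ*_i)z and ∑_{i=1}^{k_t} Δ*_i ≤ min{ 1,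 δ⁻¹h_t + √(κh_t) }. Then for all t ≥ 1: f(x_t) − f* ≤ C·exp(−(t−1)/(4M_1)). -/
open scoped RealInnerProductSpace BigOperators
open Metric

lemma fwaux_hasDerivAt {d : ℕ} {f : EuclideanSpace ℝ (Fin d) → ℝ}
    {g : EuclideanSpace ℝ (Fin d) → EuclideanSpace ℝ (Fin d)}
    (hgrad : ∀ y, HasGradientAt f (g y) y) (a v : EuclideanSpace ℝ (Fin d)) (t : ℝ) :
    HasDerivAt (fun t : ℝ => f (a + t • v)) ⟪g (a + t • v), v⟫ t := by
  have h1 : HasDerivAt (fun t : ℝ => a + t • v) v t := by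
    simpa using ((hasDerivAt_id t).smul_const v).const_add a
  have h2 := (hgrad (a + t • v)).hasFDerivAt.comp_hasDerivAt t h1
  rw [InnerProductSpace.toDual_apply_apply] at h2
  exact h2

lemma fwaux_descent {d : ℕ} {f : EuclideanSpace ℝ (Fin d) → ℝ}
    {g : EuclideanSpace ℝ (Fin d) → EuclideanSpace ℝ (Fin d)}
    (hgrad : ∀ y, HasGradientAt f (g y) y) {β : ℝ}
    (hsmooth : ∀ y z, ‖g y - g z‖ ≤ β * ‖y - z‖) (a b : EuclideanSpace ℝ (Fin d)) :
    f b ≤ f a + ⟪g a, b - a⟫ + β / 2 * ‖b - a‖ ^ 2 := by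
  set v := b - a with hv
  have hd : ∀ t : ℝ, HasDerivAt
      (fun t : ℝ => f (a + t • v) - t * ⟪g a, v⟫ - β / 2 * ‖v‖ ^ 2 * t ^ 2)
      (⟪g (a + t • v), v⟫ - ⟪g a, v⟫ - β * ‖v‖ ^ 2 * t) t := by
    intro t
    have h1 := fwaux_hasDerivAt hgrad a v t
    have h2 := (hasDerivAt_id t).mul_const ⟪g a, v⟫
    have h3 := ((hasDerivAt_id t).pow 2).const_mul (β / 2 * ‖v‖ ^ 2)
    refine ((h1.sub h2).sub h3).congr_deriv ?_
    simp only [id, Nat.cast_ofNat]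
    ring
  have hanti : AntitoneOn
      (fun t : ℝ => f (a + t • v) - t * ⟪g a, v⟫ - β / 2 * ‖v‖ ^ 2 * t ^ 2) (Set.Icc 0 1) := by
    apply antitoneOn_of_deriv_nonpos (convex_Icc 0 1)
    · exact fun t _ => (hd t).continuousAt.continuousWithinAt
    · exact fun t _ => (hd t).differentiableAt.differentiableWithinAt
    · intro t ht
      rw [interior_Icc] at ht
      rw [(hd t).deriv]
      have h1 : ⟪g (a + t • v) - g a, v⟫ ≤ ‖g (a + t • v) - g a‖ * ‖v‖ := real_inner_le_norm _ _
      have h2 := hsmooth (a + t • v) a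
      rw [add_sub_cancel_left, norm_smul, Real.norm_of_nonneg ht.1.le] at h2
      have h3 := mul_le_mul_of_nonneg_right h2 (norm_nonneg v)
      rw [inner_sub_left] at h1
      nlinarith
  have := hanti (Set.left_mem_Icc.2 zero_le_one) (Set.right_mem_Icc.2 zero_le_one) zero_le_one
  simp [hv] at this
  rw [hv]
  linarith

lemma fwaux_convex {d : ℕ} {f : EuclideanSpace ℝ (Fin d) → ℝ}
    {g : EuclideanSpace ℝ (Fin d) → EuclideanSpace ℝ (Fin d)}
    (hfconv : ConvexOn ℝ Set.univ f)
    (hgrad : ∀ y, HasGradientAt f (g y) y) (a b : EuclideanSpace ℝ (Fin d)) :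
    f a + ⟪g a, b - a⟫ ≤ f b := by
  have hc : ConvexOn ℝ Set.univ (fun t : ℝ => f (a + t • (b - a))) := by
    refine ⟨convex_univ, fun s _ t _ p q hp hq hpq => ?_⟩
    have := hfconv.2 (Set.mem_univ (a + s • (b - a))) (Set.mem_univ (a + t • (b - a))) hp hq hpq
    have e : a + (p • s + q • t) • (b - a) = p • (a + s • (b - a)) + q • (a + t • (b - a)) := by
      have hq' : q = 1 - p := by linarith
      subst hq'
      simp only [smul_eq_mul]
      module
    simp only [e]
    exact this
  have h := hc.le_slope_of_hasDerivAt (Set.mem_univ 0) (Set.mem_univ 1) zero_lt_one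
    (fwaux_hasDerivAt hgrad a (b - a) 0)
  simp [slope_def_field] at h
  linarith

lemma fwaux_sum_bound {a b κ δ h : ℝ} (hδ : 0 < δ) (hκ : 0 ≤ κ) (hh : 0 ≤ h) (hE : h ≤ b)
    (ha : a ≤ min 1 (δ⁻¹ * h + Real.sqrt (κ * h))) :
    a ≤ min (Real.sqrt (2 * max (2 * κ) δ⁻¹ * b)) 1 := by
  have ha1 := ha.trans (min_le_left _ _)
  have ha2 := ha.trans (min_le_right _ _)
  refine le_min ?_ ha1
  set m := max (2 * κ) δ⁻¹ with hm
  have hm1 : 2 * κ ≤ m := le_max_left _ _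
  have hm2 : δ⁻¹ ≤ m := le_max_right _ _
  have hm0 : 0 ≤ m := (inv_pos.2 hδ).le.trans hm2
  have hmb : m * h ≤ m * b := mul_le_mul_of_nonneg_left hE hm0
  have hmh : 0 ≤ m * h := mul_nonneg hm0 hh
  refine le_trans ?_ (Real.sqrt_le_sqrt (show 2 * m * h ≤ 2 * m * b by nlinarith))
  set r := Real.sqrt (2 * m * h) with hr
  have hr0 : 0 ≤ r := Real.sqrt_nonneg _
  have hrr : r ^ 2 = 2 * m * h := Real.sq_sqrt (by nlinarith)
  by_cases hr1 : 1 ≤ r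
  · exact ha1.trans hr1
  · push Not at hr1
    have h1 : δ⁻¹ * h ≤ m * h := mul_le_mul_of_nonneg_right hm2 hh
    have h2 : Real.sqrt (κ * h) ≤ r / 2 := by
      apply Real.sqrt_le_iff.2 ⟨by linarith, ?_⟩
      have := mul_le_mul_of_nonneg_right hm1 hh
      nlinarith
    nlinarith

lemma fwaux_scal (S s W δ D N β η a b : ℝ) (hS0 : 0 ≤ S) (hSs : S ≤ s) (hs1 : s ≤ 1)
    (hβη : 0 ≤ β * η) (hSS : S ^ 2 ≤ S * s) (hSS2 : S * s ≤ s ^ 2)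
    (hw2 : S * (a + β * (s * η) * W ^ 2) ≤ S * (b + β * (s * η) * (2 * D ^ 2 + 2 * δ ^ 2)))
    (n3 : N ≤ 2 * (S ^ 2 * W ^ 2) + 4 * (1 - S) ^ 2 * δ ^ 2 + 4 * S ^ 2 * D ^ 2) :
    S * (a - b) + β / 2 * η * N ≤ β * η * (4 * s ^ 2 * D ^ 2 + 2 * δ ^ 2) := by
  have k1 : S ^ 2 * W ^ 2 ≤ S * s * W ^ 2 := by gcongr
  have k2 : S * s * D ^ 2 ≤ s ^ 2 * D ^ 2 := by gcongr
  have k3 : S ^ 2 * D ^ 2 ≤ s ^ 2 * D ^ 2 := by gcongr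
  have k4 : (S * s + (1 - S) ^ 2) * δ ^ 2 ≤ 1 * δ ^ 2 := by
    have k6 : S * s + (1 - S) ^ 2 ≤ 1 := by
      have := mul_nonneg hS0 (show 0 ≤ 2 - S - s by linarith)
      linarith
    exact mul_le_mul_of_nonneg_right k6 (sq_nonneg δ)
  have k5 : β * η * (S * s * (2 * D ^ 2 + 2 * δ ^ 2) - S * s * W ^ 2 + N / 2)
      ≤ β * η * (4 * s ^ 2 * D ^ 2 + 2 * δ ^ 2) := by
    apply mul_le_mul_of_nonneg_left _ hβη
    linarith
  linarith

set_option maxHeartbeats 1000000 in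
lemma fwaux_step {d : ℕ} (x xs z p w gx : EuclideanSpace ℝ (Fin d))
    (S s η β D E h α m M : ℝ)
    (hS0 : 0 ≤ S) (hSs : S ≤ s) (hs1 : s ≤ 1) (hs2 : s ^ 2 ≤ 2 * m * E)
    (hM : 4 * β / α + 8 * β * D ^ 2 * m ≤ M) (hM2 : 1 / 2 ≤ M) (hη : η = 1 / (2 * M))
    (hβ : 0 < β) (hα : 0 < α) (hD : 0 ≤ D) (hE : h ≤ E)
    (hxs : xs = x - p + S • z) (hzD : ‖xs - z‖ ≤ D)
    (hd : ‖x - xs‖ ^ 2 ≤ 2 / α * h)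
    (hw : ⟪gx, w⟫ + β * (s / (2 * M)) * ‖w - x‖ ^ 2
      ≤ ⟪gx, z⟫ + β * (s / (2 * M)) * (2 * D ^ 2 + 2 * ‖x - xs‖ ^ 2))
    (hcv : ⟪gx, xs - x⟫ ≤ - h) :
    h + ⟪gx, η • (S • w - p)⟫ + β / 2 * ‖η • (S • w - p)‖ ^ 2 ≤ (1 - 1 / (4 * M)) * E := by
  have hM0 : 0 < M := by linarith
  have hη0 : 0 < η := by rw [hη]; positivity
  have hη1 : η ≤ 1 := by rw [hη, div_le_one (by linarith)]; linarith
  have hs0 : 0 ≤ s := hS0.trans hSs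
  set δ := ‖x - xs‖ with hδ
  have hδ0 : 0 ≤ δ := norm_nonneg _
  -- norm estimate
  have e1 : S • w - p = S • (w - x) + ((1 - S) • (xs - x) + S • (xs - z)) := by
    rw [hxs]; module
  have n1 : ‖(1 - S) • (xs - x) + S • (xs - z)‖ ≤ (1 - S) * δ + S * D := by
    refine (norm_add_le _ _).trans ?_
    rw [norm_smul, norm_smul, Real.norm_of_nonneg (by linarith), Real.norm_of_nonneg hS0,
      norm_sub_rev xs x]
    gcongr
  have n2 : ‖S • w - p‖ ≤ S * ‖w - x‖ + ((1 - S) * δ + S * D) := by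
    rw [e1]
    refine (norm_add_le _ _).trans ?_
    rw [norm_smul, Real.norm_of_nonneg hS0]
    gcongr
  set W := ‖w - x‖ with hW
  have hW0 : 0 ≤ W := norm_nonneg _
  have n3 : ‖S • w - p‖ ^ 2 ≤ 2 * (S ^ 2 * W ^ 2) + 4 * (1 - S) ^ 2 * δ ^ 2 + 4 * S ^ 2 * D ^ 2 := by
    have := pow_le_pow_left₀ (norm_nonneg _) n2 2
    nlinarith [sq_nonneg (S * W - ((1 - S) * δ + S * D)), sq_nonneg ((1 - S) * δ - S * D)]
  have e2 : ⟪gx, S • w - p⟫ = ⟪gx, xs - x⟫ + S * (⟪gx, w⟫ - ⟪gx, z⟫) := by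
    rw [hxs]
    simp only [inner_sub_right, inner_add_right, real_inner_smul_right]
    ring
  have hse : s / (2 * M) = s * η := by rw [hη]; ring
  rw [hse] at hw
  rw [real_inner_smul_right, norm_smul, Real.norm_of_nonneg hη0.le, mul_pow, e2]
  have hw2 := mul_le_mul_of_nonneg_left hw hS0
  have hSS : S ^ 2 ≤ S * s := by nlinarith
  have hSS2 : S * s ≤ s ^ 2 := by nlinarith
  have hA : S * (⟪gx, w⟫ - ⟪gx, z⟫) + β / 2 * η * ‖S • w - p‖ ^ 2
      ≤ β * η * (4 * s ^ 2 * D ^ 2 + 2 * δ ^ 2) := by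
    have hβη : 0 ≤ β * η := by positivity
    exact fwaux_scal S s W δ D _ β η _ _ hS0 hSs hs1 hβη hSS hSS2 hw2 n3
  have hE0 : 0 ≤ E := by
    have : 0 ≤ 2 / α * h := (sq_nonneg _).trans hd
    have : 0 ≤ h := nonneg_of_mul_nonneg_right this (by positivity)
    linarith
  have hB : β * (4 * s ^ 2 * D ^ 2 + 2 * δ ^ 2) ≤ M * E := by
    have k1 : s ^ 2 * D ^ 2 ≤ 2 * m * E * D ^ 2 := by gcongr
    have k2 : δ ^ 2 ≤ 2 / α * E := hd.trans (by gcongr)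
    calc β * (4 * s ^ 2 * D ^ 2 + 2 * δ ^ 2)
        ≤ β * (4 * (2 * m * E * D ^ 2) + 2 * (2 / α * E)) := by
          apply mul_le_mul_of_nonneg_left _ hβ.le
          linarith
      _ = (4 * β / α + 8 * β * D ^ 2 * m) * E := by ring
      _ ≤ M * E := by gcongr
  have hηM : η * M = 1 / 2 := by rw [hη]; field_simp
  have h4 : 1 / (4 * M) = η / 2 := by rw [hη]; field_simp; norm_num
  rw [h4]
  have hA2 := mul_le_mul_of_nonneg_left hA hη0.le
  have hB2 := mul_le_mul_of_nonneg_left hB (sq_nonneg η)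
  have hB3 : η ^ 2 * (M * E) = η / 2 * E := by
    calc η ^ 2 * (M * E) = η * (η * M) * E := by ring
      _ = _ := by rw [hηM]; ring
  have hc2 := mul_le_mul_of_nonneg_left hcv hη0.le
  have hh := mul_le_mul_of_nonneg_left hE (sub_nonneg.2 hη1)
  linarith

/-- linear convergence of the NEP oracle-based fully-corrective
Frank-Wolfe variant for polytopes under quadratic growth and the
strict-complementarity-type decomposition property (Theorem 4, part 1). -/
theorem fw_nep_polytope_linear_rate_strict_complementarity {d : ℕ}
    (V : Set (EuclideanSpace ℝ (Fin d))) (hVfin : V.Finite)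
    (K : Set (EuclideanSpace ℝ (Fin d))) (hK : K = convexHull ℝ V)
    (hVext : V = K.extremePoints ℝ)
    (f : EuclideanSpace ℝ (Fin d) → ℝ)
    (g : EuclideanSpace ℝ (Fin d) → EuclideanSpace ℝ (Fin d))
    (hfconv : ConvexOn ℝ Set.univ f)
    (hgrad : ∀ y, HasGradientAt f (g y) y)
    (β : ℝ) (hβ : 0 < β)
    (hsmooth : ∀ y z, ‖g y - g z‖ ≤ β * ‖y - z‖)
    (fstar : ℝ) (hfstar : ∀ y ∈ K, fstar ≤ f y)
    (Xstar : Set (EuclideanSpace ℝ (Fin d)))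
    (hXstar : Xstar = {y | y ∈ K ∧ f y = fstar}) (hXne : Xstar.Nonempty)
    -- quadratic growth
    (α : ℝ) (hα : 0 < α)
    (hQG : ∀ y ∈ K, infDist y Xstar ^ 2 ≤ 2 / α * (f y - fstar))
    -- the set F*
    (Fstar : Set (EuclideanSpace ℝ (Fin d)))
    (hFK : Fstar ⊆ K) (hFconv : Convex ℝ Fstar) (hXF : Xstar ⊆ Fstar)
    (hFvert : ∀ y ∈ Fstar, y ∈ convexHull ℝ (V ∩ Fstar))
    (DF : ℝ) (hDF : ∀ u ∈ Fstar, ∀ w ∈ Fstar, ‖u - w‖ ≤ DF)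
    -- constants
    (δ κ C M₁ : ℝ) (hδ : 0 < δ) (hκ : 0 ≤ κ)
    (hM₁ : max (4 * β / α + 8 * β * DF ^ 2 * max (2 * κ) δ⁻¹) (1 / 2) ≤ M₁)
    -- step-size parameters
    (ρ : ℕ → ℝ)
    (hρ : ∀ t : ℕ, 1 ≤ t → ρ t =
      min (Real.sqrt (2 * max (2 * κ) δ⁻¹ * C * Real.exp (-(((t : ℝ) - 1) / (4 * M₁))))) 1
        / (2 * M₁))
    -- the iterates and their vertex decompositions
    (x : ℕ → EuclideanSpace ℝ (Fin d))
    (k : ℕ → ℕ) (vv : ∀ t : ℕ, Fin (k t) → EuclideanSpace ℝ (Fin d))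
    (lam : ∀ t : ℕ, Fin (k t) → ℝ) (w : ℕ → EuclideanSpace ℝ (Fin d))
    (hx1 : x 1 ∈ V) (hC : f (x 1) - fstar ≤ C)
    (hvvV : ∀ t, 1 ≤ t → ∀ i, vv t i ∈ V)
    (hlam0 : ∀ t, 1 ≤ t → ∀ i, 0 ≤ lam t i)
    (hlam1 : ∀ t, 1 ≤ t → ∑ i, lam t i = 1)
    (hxdecomp : ∀ t, 1 ≤ t → x t = ∑ i, lam t i • vv t i)
    (hwV : ∀ t, 1 ≤ t → w t ∈ V)
    (hwopt : ∀ t, 1 ≤ t → ∀ u ∈ V,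
      ⟪g (x t), w t⟫ + β * ρ t * ‖w t - x t‖ ^ 2
        ≤ ⟪g (x t), u⟫ + β * ρ t * ‖u - x t‖ ^ 2)
    (hstep : ∀ t, 1 ≤ t →
      (x (t + 1) ∈ convexHull ℝ (insert (w t) (Set.range (vv t))) ∧
        ∀ y ∈ convexHull ℝ (insert (w t) (Set.range (vv t))),
          ⟪g (x t), x (t + 1)⟫ + β / 2 * ‖x (t + 1) - x t‖ ^ 2
            ≤ ⟪g (x t), y⟫ + β / 2 * ‖y - x t‖ ^ 2) ∨
      (x (t + 1) ∈ convexHull ℝ (insert (w t) (Set.range (vv t))) ∧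
        ∀ y ∈ convexHull ℝ (insert (w t) (Set.range (vv t))), f (x (t + 1)) ≤ f y))
    -- the vertex-decomposition property relative to the closest optimal point
    (hclose : ∀ t, 1 ≤ t → ∀ xst ∈ Xstar, (∀ y ∈ Xstar, ‖x t - xst‖ ≤ ‖x t - y‖) →
      ∃ Δ : Fin (k t) → ℝ, ∃ z ∈ Fstar,
        (∀ i, Δ i ∈ Set.Icc 0 (lam t i)) ∧
        xst = ∑ i, (lam t i - Δ i) • vv t i + (∑ i, Δ i) • z ∧
        ∑ i, Δ i ≤ min 1 (δ⁻¹ * (f (x t) - fstar)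
          + Real.sqrt (κ * (f (x t) - fstar)))) :
    ∀ t : ℕ, 1 ≤ t →
      f (x t) - fstar ≤ C * Real.exp (-(((t : ℝ) - 1) / (4 * M₁))) := by
  have hM2 : 1 / 2 ≤ M₁ := (le_max_right _ _).trans hM₁
  have hM1 := (le_max_left _ _).trans hM₁
  have hM0 : 0 < M₁ := by linarith
  have hfcont : Continuous f :=
    continuous_iff_continuousAt.2 fun y => (hgrad y).hasFDerivAt.continuousAt
  have hKc : IsCompact K := by rw [hK]; exact hVfin.isCompact_convexHull ℝ
  have hXc : IsCompact Xstar := by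
    have : Xstar = K ∩ f ⁻¹' {fstar} := by rw [hXstar]; rfl
    rw [this]
    exact hKc.inter_right (isClosed_singleton.preimage hfcont)
  have hVK : V ⊆ K := by rw [hK]; exact subset_convexHull ℝ V
  have hKconv : Convex ℝ K := by rw [hK]; exact convex_convexHull ℝ V
  have hxK : ∀ t, 1 ≤ t → x t ∈ K := by
    intro t ht
    rw [hxdecomp t ht]
    exact hKconv.sum_mem (fun i _ => hlam0 t ht i) (hlam1 t ht) (fun i _ => hVK (hvvV t ht i))
  intro t ht
  induction t, ht using Nat.le_induction with
  | base => simpa using hC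
  | succ t ht ih =>
    obtain ⟨xs, hxsX, hxsd⟩ := hXc.exists_infDist_eq_dist hXne (x t)
    obtain ⟨Δ, z, hz, hΔ, hxs, hΔs⟩ := hclose t ht xs hxsX (by
      intro y hy
      rw [← dist_eq_norm, ← dist_eq_norm, ← hxsd]
      exact infDist_le_dist_of_mem hy)
    have hxsf : f xs = fstar := by
      rw [hXstar] at hxsX; exact hxsX.2
    set E := C * Real.exp (-(((t : ℝ) - 1) / (4 * M₁))) with hEdef
    set m := max (2 * κ) δ⁻¹ with hm
    have hh0 : 0 ≤ f (x t) - fstar := sub_nonneg.2 (hfstar _ (hxK t ht))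
    have hE0 : 0 ≤ E := hh0.trans ih
    have hm0 : 0 ≤ m := (inv_pos.2 hδ).le.trans (le_max_right _ _)
    set S := ∑ i, Δ i with hS
    set s := min (Real.sqrt (2 * m * E)) 1 with hs
    have hSs : S ≤ s := fwaux_sum_bound hδ hκ hh0 ih hΔs
    have hS0 : 0 ≤ S := Finset.sum_nonneg fun i _ => (hΔ i).1
    have hs2 : s ^ 2 ≤ 2 * m * E := by
      have : s ≤ Real.sqrt (2 * m * E) := min_le_left _ _
      calc s ^ 2 ≤ Real.sqrt (2 * m * E) ^ 2 := pow_le_pow_left₀ (hS0.trans hSs) this 2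
        _ = _ := Real.sq_sqrt (by positivity)
    have hρt : ρ t = s / (2 * M₁) := by
      rw [hρ t ht, hs, hEdef, ← mul_assoc]
    have hρ0 : 0 ≤ ρ t := by
      rw [hρt]; exact div_nonneg (hS0.trans hSs) (by linarith)
    have hD0 : 0 ≤ DF := (norm_nonneg _).trans (hDF z hz z hz)
    have hd : ‖x t - xs‖ ^ 2 ≤ 2 / α * (f (x t) - fstar) := by
      have := hQG _ (hxK t ht)
      rwa [hxsd, dist_eq_norm] at this
    -- oracle bound
    have hw : ⟪g (x t), w t⟫ + β * (s / (2 * M₁)) * ‖w t - x t‖ ^ 2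
      ≤ ⟪g (x t), z⟫ + β * (s / (2 * M₁)) * (2 * DF ^ 2 + 2 * ‖x t - xs‖ ^ 2) := by
      rw [← hρt]
      set c := ⟪g (x t), w t⟫ + β * ρ t * ‖w t - x t‖ ^ 2
        - β * ρ t * (2 * DF ^ 2 + 2 * ‖x t - xs‖ ^ 2) with hc
      have hconv : Convex ℝ {u : EuclideanSpace ℝ (Fin d) | c ≤ ⟪g (x t), u⟫} :=
        convex_halfSpace_ge (IsLinearMap.mk (fun a b => inner_add_right _ _ _)
          (fun a b => real_inner_smul_right _ _ _)) c
      have hsub : V ∩ Fstar ⊆ {u : EuclideanSpace ℝ (Fin d) | c ≤ ⟪g (x t), u⟫} := by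
        rintro u ⟨huV, huF⟩
        have h1 := hwopt t ht u huV
        have h2 := hDF u huF xs (hXF hxsX)
        have h3 : ‖u - x t‖ ≤ DF + ‖x t - xs‖ := by
          have : u - x t = (u - xs) - (x t - xs) := by abel
          rw [this]
          exact (norm_sub_le _ _).trans (by gcongr)
        have h4 : ‖u - x t‖ ^ 2 ≤ 2 * DF ^ 2 + 2 * ‖x t - xs‖ ^ 2 := by
          have := pow_le_pow_left₀ (norm_nonneg _) h3 2
          nlinarith [sq_nonneg (DF - ‖x t - xs‖)]
        have h5 := mul_le_mul_of_nonneg_left h4 (mul_nonneg hβ.le hρ0)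
        simp only [Set.mem_ofPred_eq, hc]
        linarith
      have : c ≤ ⟪g (x t), z⟫ := convexHull_min hsub hconv (hFvert z hz)
      rw [hc] at this
      linarith
    set p := ∑ i, Δ i • vv t i with hp
    have hxs' : xs = x t - p + S • z := by
      rw [hxs, hp, hxdecomp t ht, ← Finset.sum_sub_distrib]
      simp only [sub_smul]
    have hcv : ⟪g (x t), xs - x t⟫ ≤ -(f (x t) - fstar) := by
      have := fwaux_convex hfconv hgrad (x t) xs
      linarith
    set η := 1 / (2 * M₁) with hη
    have hη0 : 0 ≤ η := by positivity
    have hη1 : η ≤ 1 := by rw [hη, div_le_one (by linarith)]; linarith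
    have key := fwaux_step (x t) xs z p (w t) (g (x t)) S s η β DF E (f (x t) - fstar) α m M₁
      hS0 hSs (min_le_right _ _) hs2 hM1 hM2 hη hβ hα hD0 ih hxs'
      (hDF _ (hXF hxsX) _ hz) hd hw hcv
    set y := x t + η • (S • w t - p) with hy
    have hyx : y - x t = η • (S • w t - p) := by rw [hy]; abel
    rw [← hyx] at key
    have hyC : y ∈ convexHull ℝ (insert (w t) (Set.range (vv t))) := by
      have hc := convex_convexHull ℝ (insert (w t) (Set.range (vv t)))
      have := hc.sum_mem (t := (Finset.univ : Finset (Option (Fin (k t)))))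
        (w := fun o => o.elim (η * S) (fun i => lam t i - η * Δ i))
        (z := fun o => o.elim (w t) (vv t)) ?_ ?_ ?_
      · convert this using 1
        rw [Fintype.sum_option]
        simp only [Option.elim, sub_smul, mul_smul, Finset.sum_sub_distrib, ← Finset.smul_sum]
        rw [hy, ← hxdecomp t ht, ← hp]
        module
      · rintro (_ | i) _
        · exact mul_nonneg hη0 hS0
        · have h1 := (hΔ i).1
          have h2 := (hΔ i).2
          simp only [Option.elim]
          nlinarith
      · rw [Fintype.sum_option]
        simp only [Option.elim, Finset.sum_sub_distrib, ← Finset.mul_sum]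
        rw [hlam1 t ht, ← hS]
        ring
      · rintro (_ | i) _
        · exact subset_convexHull ℝ _ (Set.mem_insert _ _)
        · exact subset_convexHull ℝ _ (Set.mem_insert_of_mem _ (Set.mem_range_self i))
    have hfin : f (x (t + 1)) ≤ f (x t) + ⟪g (x t), y - x t⟫ + β / 2 * ‖y - x t‖ ^ 2 := by
      rcases hstep t ht with ⟨_, h⟩ | ⟨_, h⟩
      · have h1 := h y hyC
        have h2 := fwaux_descent hgrad hsmooth (x t) (x (t + 1))
        rw [inner_sub_right] at h2 ⊢
        linarith
      · exact (h y hyC).trans (fwaux_descent hgrad hsmooth (x t) y)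
    have hexp : C * Real.exp (-((((t + 1 : ℕ) : ℝ) - 1) / (4 * M₁)))
        = Real.exp (-(1 / (4 * M₁))) * E := by
      rw [hEdef, mul_left_comm, ← Real.exp_add]
      congr 2
      push_cast
      ring
    rw [hexp]
    have h1 : 1 - 1 / (4 * M₁) ≤ Real.exp (-(1 / (4 * M₁))) := by
      have := Real.add_one_le_exp (-(1 / (4 * M₁)))
      linarith
    have h2 := mul_le_mul_of_nonneg_right h1 hE0
    linarith
end

section
/- In the setting of the previous linear convergence result (quadratic growth with parameter α > 0, δ-strict-complementarity-type decomposition assumption ∑Δ*_i ≤ min{1, δ⁻¹h_t + √(κh_t)}, C ≥ f(x_1) − f*, M_1 ≥ max{ 4β/α + 8βD_{F*}²·max{2κ, δ⁻¹}, 1/2 }), suppose additionally that 2κ ≤ δ⁻¹ and κ > 0, let M_2 ≥ max{ 4β/α + 16βκD_{F*}², 1/2 }, and let τ ≥ 4M_1·log(C/(δ²κ)) + 1. If for all iterations t < τ the algorithm uses ρ_t = min{ √( 2·max{2κ, δ⁻¹}·C·exp(−(t−1)/(4M_1)) ), 1 } / (2M_1) and for all t ≥ τ it uses ρ_t = min{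 2δκ·exp(−(t−τ)/(8M_2)), 1 } / (2M_2), then for all t ≥ τ: f(x_t) − f* ≤ δ²κ·exp(−(t−τ)/(4M_2)). -/
open scoped RealInnerProductSpace BigOperators
open Metric

theorem aux_norm_sq_add_le {E : Type*} [NormedAddCommGroup E] [InnerProductSpace ℝ E] (a b : E) :
    ‖a + b‖ ^ 2 ≤ 2 * ‖a‖ ^ 2 + 2 * ‖b‖ ^ 2 := by
  have h := norm_add_le a b
  have h0 := norm_nonneg (a + b)
  nlinarith [sq_nonneg (‖a‖ - ‖b‖)]

theorem aux_line {E : Type*} [NormedAddCommGroup E] [InnerProductSpace ℝ E] [CompleteSpace E]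
    (f : E → ℝ) (g : E → E) (hgrad : ∀ y, HasGradientAt f (g y) y) (x v : E) (s : ℝ) :
    HasDerivAt (fun s : ℝ => f (x + s • v)) (⟪g (x + s • v), v⟫) s := by
  have h1 : HasDerivAt (fun s : ℝ => x + s • v) v s := by
    simpa using ((hasDerivAt_id s).smul_const v).const_add x
  have h2 := (hgrad (x + s • v)).hasFDerivAt.comp_hasDerivAt s h1
  simp only [InnerProductSpace.toDual_apply_apply] at h2
  exact h2

theorem aux_descent {E : Type*} [NormedAddCommGroup E] [InnerProductSpace ℝ E] [CompleteSpace E]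
    (f : E → ℝ) (g : E → E) (hgrad : ∀ y, HasGradientAt f (g y) y) (β : ℝ)
    (hsmooth : ∀ y z, ‖g y - g z‖ ≤ β * ‖y - z‖) (x y : E) :
    f y ≤ f x + ⟪g x, y - x⟫ + β / 2 * ‖y - x‖ ^ 2 := by
  set v := y - x with hv
  have hd : ∀ s : ℝ, HasDerivAt (fun s : ℝ => f (x + s • v) - s * ⟪g x, v⟫
      - s ^ 2 * (β / 2 * ‖v‖ ^ 2))
      (⟪g (x + s • v), v⟫ - ⟪g x, v⟫ - 2 * s * (β / 2 * ‖v‖ ^ 2)) s := by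
    intro s
    have h1 := aux_line f g hgrad x v s
    have h2 : HasDerivAt (fun s : ℝ => s * ⟪g x, v⟫) (⟪g x, v⟫) s := by
      simpa using (hasDerivAt_id s).mul_const (⟪g x, v⟫)
    have h3 : HasDerivAt (fun s : ℝ => s ^ 2 * (β / 2 * ‖v‖ ^ 2))
        (2 * s * (β / 2 * ‖v‖ ^ 2)) s := by
      simpa using (hasDerivAt_pow 2 s).mul_const (β / 2 * ‖v‖ ^ 2)
    exact (h1.sub h2).sub h3
  have hanti : AntitoneOn (fun s : ℝ => f (x + s • v) - s * ⟪g x, v⟫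
      - s ^ 2 * (β / 2 * ‖v‖ ^ 2)) (Set.Ici 0) := by
    apply antitoneOn_of_deriv_nonpos (convex_Ici 0)
    · exact fun s _ => (hd s).continuousAt.continuousWithinAt
    · exact fun s _ => (hd s).differentiableAt.differentiableWithinAt
    · intro s hs
      rw [(hd s).deriv]
      have hs0 : 0 < s := by simpa using hs
      have h1 : ⟪g (x + s • v) - g x, v⟫ ≤ ‖g (x + s • v) - g x‖ * ‖v‖ := real_inner_le_norm _ _
      have h2 := hsmooth (x + s • v) x
      have h3 : ‖x + s • v - x‖ = s * ‖v‖ := by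
        rw [add_sub_cancel_left, norm_smul, Real.norm_of_nonneg hs0.le]
      rw [h3] at h2
      rw [inner_sub_left] at h1
      have h4 := mul_le_mul_of_nonneg_right h2 (norm_nonneg v)
      nlinarith
  have := hanti (Set.mem_Ici.2 le_rfl) (Set.mem_Ici.2 zero_le_one) zero_le_one
  simp only [one_smul, zero_smul, add_zero] at this
  have hxy : x + v = y := by simp [hv]
  rw [hxy] at this
  nlinarith

theorem aux_convex {E : Type*} [NormedAddCommGroup E] [InnerProductSpace ℝ E] [CompleteSpace E]
    (f : E → ℝ) (g : E → E) (hgrad : ∀ y, HasGradientAt f (g y) y)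
    (hfconv : ConvexOn ℝ Set.univ f) (x y : E) :
    f x + ⟪g x, y - x⟫ ≤ f y := by
  set v := y - x with hv
  have hc : ConvexOn ℝ Set.univ (fun s : ℝ => f (x + s • v)) := by
    refine ⟨convex_univ, ?_⟩
    intro a _ b _ p q hp hq hpq
    have h := hfconv.2 (Set.mem_univ (x + a • v)) (Set.mem_univ (x + b • v)) hp hq hpq
    have e : x + (p • a + q • b) • v = p • (x + a • v) + q • (x + b • v) := by
      have : q = 1 - p := by linarith
      subst this
      simp only [smul_eq_mul]
      module
    simp only [e]
    exact h
  have hd := aux_line f g hgrad x v 0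
  have := hc.le_slope_of_hasDerivAt (Set.mem_univ 0) (Set.mem_univ 1) zero_lt_one hd
  have hxy : x + v = y := by simp [hv]
  simp [slope_def_field, hxy] at this
  linarith

theorem aux_step {E : Type*} [NormedAddCommGroup E] [InnerProductSpace ℝ E] [CompleteSpace E]
    (V : Set E) (f : E → ℝ) (g : E → E)
    (hfconv : ConvexOn ℝ Set.univ f)
    (hgrad : ∀ y, HasGradientAt f (g y) y)
    (β : ℝ) (hβ : 0 < β)
    (hsmooth : ∀ y z, ‖g y - g z‖ ≤ β * ‖y - z‖)
    (fstar : ℝ) (α : ℝ)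
    (Fstar : Set E) (hFconv : Convex ℝ Fstar)
    (hFvert : ∀ y ∈ Fstar, y ∈ convexHull ℝ (V ∩ Fstar))
    (DF : ℝ) (hDF : ∀ u ∈ Fstar, ∀ w ∈ Fstar, ‖u - w‖ ≤ DF)
    (x x' w xst : E) (n : ℕ) (vv : Fin n → E) (lam : Fin n → ℝ)
    (hlam1 : ∑ i, lam i = 1) (hlam0 : ∀ i, 0 ≤ lam i)
    (hx : x = ∑ i, lam i • vv i)
    (hxstF : xst ∈ Fstar) (hfx : f xst = fstar)
    (hd : ‖x - xst‖ ^ 2 ≤ 2 / α * (f x - fstar))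
    (hα : 0 < α)
    (M S H q : ℝ) (hM : 4 * β / α + 4 * β * DF ^ 2 * q ≤ M) (hM2 : 1 / 2 ≤ M)
    (hS0 : 0 ≤ S) (hS1 : S ≤ 1) (hSH : S ^ 2 ≤ q * H) (hH : f x - fstar ≤ H)
    (hwopt : ∀ u ∈ V,
      ⟪g x, w⟫ + β * (S / (2 * M)) * ‖w - x‖ ^ 2
        ≤ ⟪g x, u⟫ + β * (S / (2 * M)) * ‖u - x‖ ^ 2)
    (hstep : 
      (x' ∈ convexHull ℝ (insert w (Set.range vv)) ∧
        ∀ y ∈ convexHull ℝ (insert w (Set.range vv)),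
          ⟪g x, x'⟫ + β / 2 * ‖x' - x‖ ^ 2
            ≤ ⟪g x, y⟫ + β / 2 * ‖y - x‖ ^ 2) ∨
      (x' ∈ convexHull ℝ (insert w (Set.range vv)) ∧
        ∀ y ∈ convexHull ℝ (insert w (Set.range vv)), f x' ≤ f y))
    (Δ : Fin n → ℝ) (z : E) (hz : z ∈ Fstar) (hΔ : ∀ i, Δ i ∈ Set.Icc 0 (lam i))
    (hxst : xst = ∑ i, (lam i - Δ i) • vv i + (∑ i, Δ i) • z)
    (hΔS : ∑ i, Δ i ≤ S) :
    f x' - fstar ≤ H * Real.exp (-(1 / (4 * M))) := by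
  -- the mass may be taken equal to S
  have hext : ∃ Δ' : Fin n → ℝ, ∃ z' ∈ Fstar, (∀ i, Δ' i ∈ Set.Icc 0 (lam i)) ∧
      xst = ∑ i, (lam i - Δ' i) • vv i + S • z' ∧ ∑ i, Δ' i = S := by
    rcases eq_or_lt_of_le hΔS with h | h
    · exact ⟨Δ, z, hz, hΔ, by rw [← h]; exact hxst, h⟩
    · set D := ∑ i, Δ i with hD
      have hD0 : 0 ≤ D := Finset.sum_nonneg fun i _ => (hΔ i).1
      have hSp : 0 < S := lt_of_le_of_lt hD0 h
      have hDp : 0 < 1 - D := by linarith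
      set s := (S - D) / (1 - D) with hs
      have hs0 : 0 ≤ s := div_nonneg (by linarith) hDp.le
      have hs1 : s ≤ 1 := by rw [hs, div_le_one hDp]; linarith
      have hsD : s * (1 - D) = S - D := by rw [hs]; field_simp
      have hsum : (1 - s) * D + s = S := by linarith
      refine ⟨fun i => (1 - s) * Δ i + s * lam i, ((1 - s) * D / S) • z + (s / S) • xst, ?_, ?_, ?_, ?_⟩
      · apply hFconv hz hxstF
        · exact div_nonneg (mul_nonneg (by linarith) hD0) hSp.le
        · exact div_nonneg hs0 hSp.le
        · rw [← add_div, hsum, div_self hSp.ne']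
      · intro i
        have h1 := (hΔ i).1
        have h2 := (hΔ i).2
        have h3 := hlam0 i
        constructor
        · have : 0 ≤ 1 - s := by linarith
          positivity
        · nlinarith
      · have e1 : ∑ i, (lam i - ((1 - s) * Δ i + s * lam i)) • vv i
            = (1 - s) • ∑ i, (lam i - Δ i) • vv i := by
          rw [Finset.smul_sum]
          refine Finset.sum_congr rfl fun i _ => ?_
          rw [smul_smul]; congr 1; ring
        have e2 : ∑ i, (lam i - Δ i) • vv i = xst - D • z := by rw [hxst]; abel
        rw [e1, e2, smul_add, smul_smul, smul_smul, mul_div_cancel₀ _ hSp.ne', mul_div_cancel₀ _ hSp.ne']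
        module
      · rw [Finset.sum_add_distrib, ← Finset.mul_sum, ← Finset.mul_sum, hlam1, ← hD]; linarith
  clear hΔS hxst hΔ hz
  clear Δ z
  obtain ⟨Δ, z, hz, hΔ, hxst, hΔS⟩ := hext
  have hMp : 0 < M := by linarith
  set η := 1 / (2 * M) with hη
  have hη0 : 0 ≤ η := by positivity
  have hη1 : η ≤ 1 := by rw [hη, div_le_one (by positivity)]; linarith
  have hρ : S / (2 * M) = η * S := by rw [hη]; ring
  rw [hρ] at hwopt
  -- candidate point
  set p := ∑ i, (lam i - Δ i) • vv i + S • w with hp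
  have hpxst : p = xst + S • (w - z) := by rw [hp, hxst]; module
  have hpmem : p ∈ convexHull ℝ (insert w (Set.range vv)) := by
    have := (convex_convexHull ℝ (insert w (Set.range vv))).sum_mem
      (t := (Finset.univ : Finset (Option (Fin n))))
      (w := fun o => o.elim S (fun i => lam i - Δ i)) (z := fun o => o.elim w vv)
      (by
        rintro (_ | i) _
        · exact hS0
        · exact sub_nonneg.2 (hΔ i).2)
      (by rw [Fintype.sum_option]; simp [Finset.sum_sub_distrib, hlam1, hΔS])
      (by
        rintro (_ | i) _
        · exact subset_convexHull ℝ _ (Set.mem_insert _ _)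
        · exact subset_convexHull ℝ _ (Set.mem_insert_of_mem _ (Set.mem_range_self i)))
    rw [Fintype.sum_option] at this
    simpa [hp, add_comm] using this
  have hxmem : x ∈ convexHull ℝ (insert w (Set.range vv)) := by
    rw [hx]
    exact (convex_convexHull ℝ _).sum_mem (fun i _ => hlam0 i) hlam1
      (fun i _ => subset_convexHull ℝ _ (Set.mem_insert_of_mem _ (Set.mem_range_self i)))
  set y := (1 - η) • x + η • p with hy
  have hymem : y ∈ convexHull ℝ (insert w (Set.range vv)) :=
    (convex_convexHull ℝ _) hxmem hpmem (by linarith) hη0 (by ring)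
  -- progress bound
  have hprog : f x' ≤ f x + ⟪g x, y - x⟫ + β / 2 * ‖y - x‖ ^ 2 := by
    rcases hstep with ⟨_, h⟩ | ⟨_, h⟩
    · have h1 := h y hymem
      have h2 := aux_descent f g hgrad β hsmooth x x'
      rw [inner_sub_right] at h2 ⊢
      linarith
    · exact (h y hymem).trans (aux_descent f g hgrad β hsmooth x y)
  -- NEP oracle
  set R := 2 * DF ^ 2 + 2 * ‖x - xst‖ ^ 2 with hR
  have hβρ : 0 ≤ β * (η * S) := by positivity
  have hor : ⟪g x, w⟫ + β * (η * S) * ‖w - x‖ ^ 2 ≤ ⟪g x, z⟫ + β * (η * S) * R := by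
    have hsub : convexHull ℝ (V ∩ Fstar) ⊆
        {u | ⟪g x, w⟫ + β * (η * S) * ‖w - x‖ ^ 2 - β * (η * S) * R ≤ ⟪g x, u⟫} := by
      apply convexHull_min
      · rintro u ⟨huV, huF⟩
        have h1 := hwopt u huV
        have h2 : ‖u - x‖ ^ 2 ≤ R := by
          have h3 := aux_norm_sq_add_le (u - xst) (xst - x)
          rw [sub_add_sub_cancel, norm_sub_rev xst x] at h3
          have h4 := hDF u huF xst hxstF
          have h5 : ‖u - xst‖ ^ 2 ≤ DF ^ 2 := pow_le_pow_left₀ (norm_nonneg _) h4 2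
          linarith
        have h6 := mul_le_mul_of_nonneg_left h2 hβρ
        simp only [Set.mem_ofPred_eq]
        linarith
      · exact convex_halfSpace_ge (innerₗ E (g x)).isLinear _
    have := hsub (hFvert z hz)
    simp only [Set.mem_ofPred_eq] at this
    linarith
  -- norm bound
  have hyx : y - x = η • (((1 - S) • (xst - x) + S • (xst - z)) + S • (w - x)) := by
    rw [hy, hpxst]; module
  have hyx2 : y - x = η • (xst - x) + (η * S) • (w - z) := by
    rw [hy, hpxst]; module
  have hn : ‖y - x‖ ^ 2 ≤ η ^ 2 * (4 * ((1 - S) ^ 2 * ‖x - xst‖ ^ 2 + S ^ 2 * DF ^ 2)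
      + 2 * (S ^ 2 * ‖w - x‖ ^ 2)) := by
    rw [hyx, norm_smul, mul_pow, Real.norm_eq_abs, sq_abs]
    apply mul_le_mul_of_nonneg_left _ (sq_nonneg _)
    have h1 := aux_norm_sq_add_le ((1 - S) • (xst - x) + S • (xst - z)) (S • (w - x))
    have h2 := aux_norm_sq_add_le ((1 - S) • (xst - x)) (S • (xst - z))
    have h5 : ‖xst - z‖ ^ 2 ≤ DF ^ 2 := pow_le_pow_left₀ (norm_nonneg _) (hDF _ hxstF _ hz) 2
    have h6 := mul_le_mul_of_nonneg_left h5 (sq_nonneg S)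
    simp only [norm_smul, mul_pow, Real.norm_eq_abs, sq_abs] at h1 h2
    rw [norm_sub_rev xst x] at h2
    linarith
  have hin : ⟪g x, y - x⟫ ≤ - η * (f x - fstar) + (η * S) * (β * (η * S) * (R - ‖w - x‖ ^ 2)) := by
    rw [hyx2, inner_add_right, inner_smul_right, inner_smul_right, inner_sub_right (g x) w z]
    have h1 := aux_convex f g hgrad hfconv x xst
    rw [hfx] at h1
    have h2 := mul_le_mul_of_nonneg_left (show ⟪g x, xst - x⟫ ≤ -(f x - fstar) by linarith) hη0
    have h3 := mul_le_mul_of_nonneg_left (show ⟪g x, w⟫ - ⟪g x, z⟫ ≤ β * (η * S) * (R - ‖w - x‖ ^ 2) by linarith)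
      (mul_nonneg hη0 hS0)
    linarith
  have hH0 : 0 ≤ f x - fstar := by
    have : 0 ≤ 2 / α * (f x - fstar) := (sq_nonneg _).trans hd
    exact nonneg_of_mul_nonneg_right this (by positivity)
  have htot : f x' - fstar ≤ (1 - η) * (f x - fstar)
      + β * η ^ 2 * (2 * ‖x - xst‖ ^ 2 + 4 * S ^ 2 * DF ^ 2) := by
    have h1 := mul_le_mul_of_nonneg_left hn (show 0 ≤ β / 2 by positivity)
    have h2 : 0 ≤ β * η ^ 2 * (2 * ‖x - xst‖ ^ 2) * (2 * S * (1 - S)) := by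
      have : 0 ≤ 1 - S := by linarith
      positivity
    rw [hR] at hin
    nlinarith
  have hb1 : β * η ^ 2 * (2 * ‖x - xst‖ ^ 2 + 4 * S ^ 2 * DF ^ 2) ≤ η ^ 2 * (M * H) := by
    have h1 : β * (2 * ‖x - xst‖ ^ 2) ≤ 4 * β / α * H := by
      have : ‖x - xst‖ ^ 2 ≤ 2 / α * H :=
        hd.trans (mul_le_mul_of_nonneg_left hH (by positivity))
      calc β * (2 * ‖x - xst‖ ^ 2) ≤ β * (2 * (2 / α * H)) := by gcongr
        _ = _ := by ring
    have h2 : β * (4 * S ^ 2 * DF ^ 2) ≤ 4 * β * DF ^ 2 * q * H := by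
      calc β * (4 * S ^ 2 * DF ^ 2) ≤ β * (4 * (q * H) * DF ^ 2) := by gcongr
        _ = _ := by ring
    have h3 : (4 * β / α + 4 * β * DF ^ 2 * q) * H ≤ M * H :=
      mul_le_mul_of_nonneg_right hM (hH0.trans hH)
    have := mul_le_mul_of_nonneg_left (show β * (2 * ‖x - xst‖ ^ 2 + 4 * S ^ 2 * DF ^ 2) ≤ M * H by linarith) (sq_nonneg η)
    linarith
  have hb2 : (1 - η) * (f x - fstar) ≤ (1 - η) * H := mul_le_mul_of_nonneg_left hH (by linarith)
  have e : (1 - η) * H + η ^ 2 * (M * H) = H * (1 - 1 / (4 * M)) := by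
    rw [hη]; field_simp; ring
  have hexp := Real.add_one_le_exp (-(1 / (4 * M)))
  have := mul_le_mul_of_nonneg_left hexp (hH0.trans hH)
  linarith

/-- improved linear convergence of the NEP oracle-based
fully-corrective Frank-Wolfe variant in the second phase, under quadratic
growth and the strict-complementarity-type decomposition property
(Theorem 4, part 2). -/
theorem fw_nep_polytope_linear_rate_strict_complementarity_phase_two {d : ℕ}
    (V : Set (EuclideanSpace ℝ (Fin d))) (hVfin : V.Finite)
    (K : Set (EuclideanSpace ℝ (Fin d))) (hK : K = convexHull ℝ V)
    (hVext : V = K.extremePoints ℝ)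
    (f : EuclideanSpace ℝ (Fin d) → ℝ)
    (g : EuclideanSpace ℝ (Fin d) → EuclideanSpace ℝ (Fin d))
    (hfconv : ConvexOn ℝ Set.univ f)
    (hgrad : ∀ y, HasGradientAt f (g y) y)
    (β : ℝ) (hβ : 0 < β)
    (hsmooth : ∀ y z, ‖g y - g z‖ ≤ β * ‖y - z‖)
    (fstar : ℝ) (hfstar : ∀ y ∈ K, fstar ≤ f y)
    (Xstar : Set (EuclideanSpace ℝ (Fin d)))
    (hXstar : Xstar = {y | y ∈ K ∧ f y = fstar}) (hXne : Xstar.Nonempty)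
    -- quadratic growth
    (α : ℝ) (hα : 0 < α)
    (hQG : ∀ y ∈ K, infDist y Xstar ^ 2 ≤ 2 / α * (f y - fstar))
    -- the set F*
    (Fstar : Set (EuclideanSpace ℝ (Fin d)))
    (hFK : Fstar ⊆ K) (hFconv : Convex ℝ Fstar) (hXF : Xstar ⊆ Fstar)
    (hFvert : ∀ y ∈ Fstar, y ∈ convexHull ℝ (V ∩ Fstar))
    (DF : ℝ) (hDF : ∀ u ∈ Fstar, ∀ w ∈ Fstar, ‖u - w‖ ≤ DF)
    -- constants
    (δ κ C M₁ M₂ : ℝ) (hδ : 0 < δ) (hκ : 0 < κ) (hκδ : 2 * κ ≤ δ⁻¹)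
    (hM₁ : max (4 * β / α + 8 * β * DF ^ 2 * max (2 * κ) δ⁻¹) (1 / 2) ≤ M₁)
    (hM₂ : max (4 * β / α + 16 * β * κ * DF ^ 2) (1 / 2) ≤ M₂)
    (τ : ℕ) (hτ1 : 1 ≤ τ)
    (hτ : 4 * M₁ * Real.log (C / (δ ^ 2 * κ)) + 1 ≤ (τ : ℝ))
    -- step-size parameters: phase one for t < τ, phase two for t ≥ τ
    (ρ : ℕ → ℝ)
    (hρ₁ : ∀ t : ℕ, 1 ≤ t → t < τ → ρ t =
      min (Real.sqrt (2 * max (2 * κ) δ⁻¹ * C * Real.exp (-(((t : ℝ) - 1) / (4 * M₁))))) 1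
        / (2 * M₁))
    (hρ₂ : ∀ t : ℕ, τ ≤ t → ρ t =
      min (2 * δ * κ * Real.exp (-(((t : ℝ) - (τ : ℝ)) / (8 * M₂)))) 1
        / (2 * M₂))
    -- the iterates and their vertex decompositions
    (x : ℕ → EuclideanSpace ℝ (Fin d))
    (k : ℕ → ℕ) (vv : ∀ t : ℕ, Fin (k t) → EuclideanSpace ℝ (Fin d))
    (lam : ∀ t : ℕ, Fin (k t) → ℝ) (w : ℕ → EuclideanSpace ℝ (Fin d))
    (hx1 : x 1 ∈ V) (hC : f (x 1) - fstar ≤ C)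
    (hvvV : ∀ t, 1 ≤ t → ∀ i, vv t i ∈ V)
    (hlam0 : ∀ t, 1 ≤ t → ∀ i, 0 ≤ lam t i)
    (hlam1 : ∀ t, 1 ≤ t → ∑ i, lam t i = 1)
    (hxdecomp : ∀ t, 1 ≤ t → x t = ∑ i, lam t i • vv t i)
    (hwV : ∀ t, 1 ≤ t → w t ∈ V)
    (hwopt : ∀ t, 1 ≤ t → ∀ u ∈ V,
      ⟪g (x t), w t⟫ + β * ρ t * ‖w t - x t‖ ^ 2
        ≤ ⟪g (x t), u⟫ + β * ρ t * ‖u - x t‖ ^ 2)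
    (hstep : ∀ t, 1 ≤ t →
      (x (t + 1) ∈ convexHull ℝ (insert (w t) (Set.range (vv t))) ∧
        ∀ y ∈ convexHull ℝ (insert (w t) (Set.range (vv t))),
          ⟪g (x t), x (t + 1)⟫ + β / 2 * ‖x (t + 1) - x t‖ ^ 2
            ≤ ⟪g (x t), y⟫ + β / 2 * ‖y - x t‖ ^ 2) ∨
      (x (t + 1) ∈ convexHull ℝ (insert (w t) (Set.range (vv t))) ∧
        ∀ y ∈ convexHull ℝ (insert (w t) (Set.range (vv t))), f (x (t + 1)) ≤ f y))
    -- the vertex-decomposition property relative to the closest optimal point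
    (hclose : ∀ t, 1 ≤ t → ∀ xst ∈ Xstar, (∀ y ∈ Xstar, ‖x t - xst‖ ≤ ‖x t - y‖) →
      ∃ Δ : Fin (k t) → ℝ, ∃ z ∈ Fstar,
        (∀ i, Δ i ∈ Set.Icc 0 (lam t i)) ∧
        xst = ∑ i, (lam t i - Δ i) • vv t i + (∑ i, Δ i) • z ∧
        ∑ i, Δ i ≤ min 1 (δ⁻¹ * (f (x t) - fstar)
          + Real.sqrt (κ * (f (x t) - fstar)))) :
    ∀ t : ℕ, τ ≤ t →
      f (x t) - fstar ≤ δ ^ 2 * κ * Real.exp (-(((t : ℝ) - (τ : ℝ)) / (4 * M₂))) := by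
  have hM₁a := (le_max_left _ _).trans hM₁
  have hM₁b := (le_max_right _ _).trans hM₁
  have hM₂a := (le_max_left _ _).trans hM₂
  have hM₂b := (le_max_right _ _).trans hM₂
  rw [max_eq_right hκδ] at hM₁a hρ₁
  have hM₁p : 0 < M₁ := by linarith
  have hM₂p : 0 < M₂ := by linarith
  have hδi : 0 < δ⁻¹ := by positivity
  have hxK : ∀ t, 1 ≤ t → x t ∈ K := by
    intro t ht
    rw [hxdecomp t ht, hK]
    exact (convex_convexHull ℝ _).sum_mem (fun i _ => hlam0 t ht i) (hlam1 t ht)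
      (fun i _ => subset_convexHull ℝ _ (hvvV t ht i))
  have hh0 : ∀ t, 1 ≤ t → 0 ≤ f (x t) - fstar := fun t ht => sub_nonneg.2 (hfstar _ (hxK t ht))
  have hfcont : Continuous f := continuous_iff_continuousAt.2 fun y => (hgrad y).continuousAt
  have hKc : IsCompact K := by rw [hK]; exact hVfin.isCompact_convexHull ℝ
  have hXc : IsCompact Xstar := by
    have : Xstar = K ∩ f ⁻¹' {fstar} := by rw [hXstar]; rfl
    rw [this]
    exact hKc.inter_right (isClosed_singleton.preimage hfcont)
  -- one step
  have hone : ∀ t, 1 ≤ t → ∀ M S H q : ℝ, 4 * β / α + 4 * β * DF ^ 2 * q ≤ M → 1 / 2 ≤ M →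
      0 ≤ S → S ≤ 1 → S ^ 2 ≤ q * H → f (x t) - fstar ≤ H → ρ t = S / (2 * M) →
      min 1 (δ⁻¹ * (f (x t) - fstar) + Real.sqrt (κ * (f (x t) - fstar))) ≤ S →
      f (x (t + 1)) - fstar ≤ H * Real.exp (-(1 / (4 * M))) := by
    intro t ht M S H q hM hM2 hS0 hS1 hSH hH hρ hS
    obtain ⟨xst, hxst, hdist⟩ := hXc.exists_infDist_eq_dist hXne (x t)
    have hmin : ∀ y ∈ Xstar, ‖x t - xst‖ ≤ ‖x t - y‖ := by
      intro y hy
      rw [← dist_eq_norm, ← dist_eq_norm, ← hdist]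
      exact infDist_le_dist_of_mem hy
    obtain ⟨Δ, z, hz, hΔ, hdec, hsum⟩ := hclose t ht xst hxst hmin
    have hq := hQG (x t) (hxK t ht)
    rw [hdist, dist_eq_norm] at hq
    have hfx : f xst = fstar := by rw [hXstar] at hxst; exact hxst.2
    have hwo := hwopt t ht
    rw [hρ] at hwo
    exact aux_step V f g hfconv hgrad β hβ hsmooth fstar α Fstar hFconv hFvert DF hDF
      (x t) (x (t + 1)) (w t) xst (k t) (vv t) (lam t) (hlam1 t ht) (hlam0 t ht)
      (hxdecomp t ht) (hXF hxst) hfx hq hα M S H q hM hM2 hS0 hS1 hSH hH hwo (hstep t ht)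
      Δ z hz hΔ hdec (hsum.trans hS)
  -- phase one
  have hC0 : 0 ≤ C := (hh0 1 le_rfl).trans hC
  have hph1 : ∀ t, 1 ≤ t → t ≤ τ →
      f (x t) - fstar ≤ C * Real.exp (-(((t : ℝ) - 1) / (4 * M₁))) := by
    intro t ht
    induction t, ht using Nat.le_induction with
    | base => intro _; simpa using hC
    | succ t ht ih =>
      intro htτ
      have hH := ih (by omega)
      set H := C * Real.exp (-(((t : ℝ) - 1) / (4 * M₁))) with hHdef
      have hHnn : 0 ≤ H := by positivity
      have hρ := hρ₁ t ht (by omega)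
      have hqH : 2 * δ⁻¹ * C * Real.exp (-(((t : ℝ) - 1) / (4 * M₁))) = 2 * δ⁻¹ * H := by
        rw [hHdef]; ring
      rw [hqH] at hρ
      have hs0 := Real.sqrt_nonneg (2 * δ⁻¹ * H)
      have hsq : Real.sqrt (2 * δ⁻¹ * H) ^ 2 = 2 * δ⁻¹ * H := Real.sq_sqrt (by positivity)
      have hS0 : 0 ≤ min (Real.sqrt (2 * δ⁻¹ * H)) 1 := le_min hs0 zero_le_one
      have key := hone t ht M₁ (min (Real.sqrt (2 * δ⁻¹ * H)) 1) H (2 * δ⁻¹)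
        (by linarith) hM₁b hS0 (min_le_right _ _)
        ((pow_le_pow_left₀ hS0 (min_le_left _ _) 2).trans_eq hsq) hH hρ ?_
      · refine key.trans_eq ?_
        rw [hHdef, mul_assoc, ← Real.exp_add]
        congr 2
        push_cast
        ring
      · refine le_min ?_ (min_le_left _ _)
        have hh := hh0 t ht
        set h := f (x t) - fstar with hhdef
        have hmono : Real.sqrt (2 * δ⁻¹ * h) ≤ Real.sqrt (2 * δ⁻¹ * H) :=
          Real.sqrt_le_sqrt (by gcongr)
        refine le_trans ?_ hmono
        set r := Real.sqrt (2 * δ⁻¹ * h) with hr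
        have hr0 : 0 ≤ r := Real.sqrt_nonneg _
        have hr2 : r ^ 2 = 2 * δ⁻¹ * h := Real.sq_sqrt (by positivity)
        by_cases h1 : 1 ≤ r
        · exact (min_le_left _ _).trans h1
        · push Not at h1
          refine (min_le_right _ _).trans ?_
          have h2 : Real.sqrt (κ * h) ≤ r / 2 := by
            apply Real.sqrt_le_iff.2 ⟨by linarith, ?_⟩
            have := mul_le_mul_of_nonneg_right hκδ hh
            nlinarith
          nlinarith
  have hτb : f (x τ) - fstar ≤ δ ^ 2 * κ := by
    have h1 := hph1 τ hτ1 le_rfl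
    refine h1.trans ?_
    rcases hC0.eq_or_lt with h0 | h0
    · rw [← h0, zero_mul]; positivity
    · have hD : 0 < δ ^ 2 * κ := by positivity
      have h2 : Real.log (C / (δ ^ 2 * κ)) ≤ ((τ : ℝ) - 1) / (4 * M₁) := by
        rw [le_div_iff₀ (by positivity)]; linarith
      have h3 : Real.exp (-(((τ : ℝ) - 1) / (4 * M₁))) ≤ (C / (δ ^ 2 * κ))⁻¹ := by
        rw [← Real.exp_log (show 0 < (C / (δ ^ 2 * κ))⁻¹ by positivity), Real.log_inv]
        exact Real.exp_le_exp.2 (by linarith)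
      calc C * Real.exp (-(((τ : ℝ) - 1) / (4 * M₁))) ≤ C * (C / (δ ^ 2 * κ))⁻¹ := by gcongr
        _ = δ ^ 2 * κ := by field_simp
  intro t ht
  induction t, ht using Nat.le_induction with
  | base => simpa using hτb
  | succ t ht ih =>
    have ht1 : 1 ≤ t := by omega
    set e := Real.exp (-(((t : ℝ) - (τ : ℝ)) / (8 * M₂))) with he
    have he0 : 0 < e := Real.exp_pos _
    have he2 : Real.exp (-(((t : ℝ) - (τ : ℝ)) / (4 * M₂))) = e ^ 2 := by
      rw [he, ← Real.exp_nat_mul]; congr 1; push_cast; field_simp; ring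
    have he1 : e ≤ 1 := by
      rw [he]; apply Real.exp_le_one_iff.2
      have : (τ : ℝ) ≤ t := by exact_mod_cast ht
      have : 0 ≤ ((t : ℝ) - (τ : ℝ)) / (8 * M₂) := div_nonneg (by linarith) (by positivity)
      linarith
    have hρ := hρ₂ t ht
    have hS0 : 0 ≤ min (2 * δ * κ * e) 1 := le_min (by positivity) zero_le_one
    rw [he2] at ih
    have key := hone t ht1 M₂ (min (2 * δ * κ * e) 1) (δ ^ 2 * κ * e ^ 2) (4 * κ)
        (by linarith) hM₂b hS0 (min_le_right _ _)
        ((pow_le_pow_left₀ hS0 (min_le_left _ _) 2).trans_eq (by ring)) ih hρ ?_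
    · refine key.trans_eq ?_
      rw [← he2, mul_assoc, ← Real.exp_add]
      congr 2
      push_cast
      ring
    · refine le_min ((min_le_right _ _).trans ?_) (min_le_left _ _)
      have hh := hh0 t ht1
      set h := f (x t) - fstar with hhdef
      have h2 : Real.sqrt (κ * h) ≤ δ * κ * e := by
        apply Real.sqrt_le_iff.2 ⟨by positivity, ?_⟩
        calc κ * h ≤ κ * (δ ^ 2 * κ * e ^ 2) := by gcongr
          _ = _ := by ring
      have h3 : δ⁻¹ * h ≤ δ * κ * e := by
        calc δ⁻¹ * h ≤ δ⁻¹ * (δ ^ 2 * κ * e ^ 2) := by gcongr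
          _ = δ * κ * e * e := by field_simp
          _ ≤ δ * κ * e * 1 := by gcongr
          _ = _ := by ring
      linarith
end
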